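/- Let m ≥ N and let C ⊆ F_{q^m}^N be a nonzero MRD code. Let ℐ ⊆ {1,…,N} be an index set with |ℐ| ≥ N − dim C and |ℐ| ≥ dim C, and let P_ℐ(C) ⊆ F_{q^m}^{|ℐ|} be the punctured code of C to ℐ, i.e., P_ℐ(C) = { P_ℐ(c) : c ∈ C }. Then P_ℐ(C) is an MRD code of length |ℐ| with dim P_ℐ(C) = dim C and minimum rank distance d_R(P_ℐ(C)) = |ℐ| − dim C + 1. -/

import Mathlib

open scoped BigOperators

noncomputable section

variable (q : ℕ) (Fq : Type*) {Fqm : Type*} [Field Fq] [Field Fqm] [Algebra Fq Fqm]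

/-- `V = V^q`: the image of `V` under the coordinatewise `q`-th power map equals `V`
(membership in the family `Γ(F_{q^m}^n)`). -/
def IsGalClosed {n : ℕ} (V : Submodule Fqm (Fin n → Fqm)) : Prop :=
  (fun v : Fin n → Fqm => fun i => v i ^ q) '' (V : Set (Fin n → Fqm)) =
    (V : Set (Fin n → Fqm))

/-- The `i`-th relative dimension/intersection profile (RDIP) of `C1` and `C2`. -/
noncomputable def RDIP {n : ℕ} (C1 C2 : Submodule Fqm (Fin n → Fqm)) (i : ℕ) : ℕ :=
  sSup {d : ℕ | ∃ V : Submodule Fqm (Fin n → Fqm), IsGalClosed q V ∧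
    Module.finrank Fqm ↥V = i ∧
    d = Module.finrank Fqm ↥(C1 ⊓ V) - Module.finrank Fqm ↥(C2 ⊓ V)}

/-- The `i`-th relative generalized rank weight (RGRW) of `C1` and `C2`. -/
noncomputable def RGRW {n : ℕ} (C1 C2 : Submodule Fqm (Fin n → Fqm)) (i : ℕ) : ℕ :=
  sInf {d : ℕ | ∃ V : Submodule Fqm (Fin n → Fqm), IsGalClosed q V ∧
    d = Module.finrank Fqm ↥V ∧
    i ≤ Module.finrank Fqm ↥(C1 ⊓ V) - Module.finrank Fqm ↥(C2 ⊓ V)}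

/-- The rank weight `d_R(x,0)` of a vector: the `F_q`-dimension of the `F_q`-span of
its coordinates. -/
noncomputable def rankWeight {ι : Type*} (x : ι → Fqm) : ℕ :=
  Module.finrank Fq ↥(Submodule.span Fq (Set.range x))

/-- The minimum rank distance of a (nonzero) linear code. -/
noncomputable def minRankDist {ι : Type*} (C : Submodule Fqm (ι → Fqm)) : ℕ :=
  sInf {d : ℕ | ∃ x, x ∈ C ∧ x ≠ 0 ∧ d = rankWeight Fq x}

/-- The dual code with respect to the standard bilinear form `⟨x,y⟩ = ∑ i, x i * y i`. -/
def dualCode {n : ℕ} (V : Submodule Fqm (Fin n → Fqm)) : Submodule Fqm (Fin n → Fqm) where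
  carrier := {x | ∀ v ∈ V, ∑ i, x i * v i = 0}
  add_mem' := by
    intro a b ha hb v hv
    have h1 := ha v hv
    have h2 := hb v hv
    simp only [Set.mem_setOf_eq] at *
    simp only [Pi.add_apply, add_mul]
    rw [Finset.sum_add_distrib, h1, h2, add_zero]
  zero_mem' := by
    intro v hv
    simp
  smul_mem' := by
    intro c x hx v hv
    have h := hx v hv
    simp only [Set.mem_setOf_eq] at *
    simp only [Pi.smul_apply, smul_eq_mul, mul_assoc]
    rw [← Finset.mul_sum, h, mul_zero]


/-- The punctured code `P_ℐ(C)`: the projections to the coordinates in `I` of all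
codewords of `C`. -/
def puncture {N : ℕ} (I : Finset (Fin N)) (C : Submodule Fqm (Fin N → Fqm)) :
    Submodule Fqm ({i // i ∈ I} → Fqm) :=
  Submodule.map (LinearMap.funLeft Fqm Fqm (Subtype.val : {i // i ∈ I} → Fin N)) C

/-- The shortened code `C_ℐ`: the projections to the coordinates in `I` of all
codewords of `C` whose coordinates outside `I` are zero. -/
def shorten {N : ℕ} (I : Finset (Fin N)) (C : Submodule Fqm (Fin N → Fqm)) :
    Submodule Fqm ({i // i ∈ I} → Fqm) :=
  Submodule.map (LinearMap.funLeft Fqm Fqm (Subtype.val : {i // i ∈ I} → Fin N))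
    (C ⊓ Submodule.pi ((↑I : Set (Fin N))ᶜ) fun _ => (⊥ : Submodule Fqm Fqm))

/-!
Deleting `e` coordinates lowers the rank weight of a vector by at most `e`. Hence puncturing fewer
than `d_R(C)` coordinates kills no nonzero codeword and preserves the dimension. Since puncturing
down to `dim C - 1` coordinates cannot preserve the dimension, it deletes at least `d_R(C)`
coordinates, which is the Singleton bound. When an MRD code is punctured to at least `dim C`
coordinates, its dimension is preserved and its minimum distance drops by at most the number of
deleted coordinates, so the Singleton bound is attained again.
-/

section Puncturing

variable {ι κ : Type*}

theorem rankWeight_zero : rankWeight Fq (0 : ι → Fqm) = 0 := by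
  have hspan : Submodule.span Fq (Set.range (0 : ι → Fqm)) = ⊥ := by
    rw [Submodule.span_eq_bot]
    rintro _ ⟨i, rfl⟩
    rfl
  rw [rankWeight, hspan, finrank_bot]

theorem minRankDist_le_rankWeight {C : Submodule Fqm (ι → Fqm)} {x : ι → Fqm}
    (hx : x ∈ C) (hx0 : x ≠ 0) : minRankDist Fq C ≤ rankWeight Fq x :=
  Nat.sInf_le ⟨x, hx, hx0, rfl⟩

theorem exists_rankWeight_eq_minRankDist {C : Submodule Fqm (ι → Fqm)} (hC : C ≠ ⊥) :
    ∃ x ∈ C, x ≠ 0 ∧ rankWeight Fq x = minRankDist Fq C := by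
  obtain ⟨y, hy, hy0⟩ := C.exists_mem_ne_zero_of_ne_bot hC
  obtain ⟨x, hx, hx0, hd⟩ : minRankDist Fq C ∈ {d | ∃ x, x ∈ C ∧ x ≠ 0 ∧ d = rankWeight Fq x} :=
    Nat.sInf_mem ⟨_, y, hy, hy0, rfl⟩
  exact ⟨x, hx, hx0, hd.symm⟩

variable [Fintype ι] [Fintype κ] {f : κ → ι}

theorem rankWeight_add_card_le_comp (hf : Function.Injective f) (x : ι → Fqm) :
    rankWeight Fq x + Fintype.card κ ≤ rankWeight Fq (x ∘ f) + Fintype.card ι := by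
  classical
  let y : ↥(Set.range f)ᶜ → Fqm := x ∘ Subtype.val
  have hrange : Set.range x = Set.range (x ∘ f) ∪ Set.range y := by
    rw [Set.range_comp, Set.range_comp, Subtype.range_coe, ← Set.image_union,
      Set.union_compl_self, Set.image_univ]
  have hcard : Fintype.card ↥(Set.range f)ᶜ + Fintype.card κ = Fintype.card ι := by
    rw [← Set.card_range_of_injective hf, Fintype.card_compl_set,
      Nat.sub_add_cancel (set_fintype_card_le_univ _)]
  have hsplit : rankWeight Fq x ≤ rankWeight Fq (x ∘ f) + rankWeight Fq y := by
    have := FiniteDimensional.span_of_finite Fq (Set.finite_range (x ∘ f))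
    have := FiniteDimensional.span_of_finite Fq (Set.finite_range y)
    rw [rankWeight, hrange, Submodule.span_union]
    exact Submodule.finrank_add_le_finrank_add_finrank _ _
  have hy : rankWeight Fq y ≤ Fintype.card ↥(Set.range f)ᶜ := finrank_range_le_card y
  omega

variable {C : Submodule Fqm (ι → Fqm)}

theorem finrank_map_funLeft_of_card_lt (hf : Function.Injective f)
    (hd : Fintype.card ι < minRankDist Fq C + Fintype.card κ) :
    Module.finrank Fqm ↥(C.map (LinearMap.funLeft Fqm Fqm f)) = Module.finrank Fqm ↥C := by
  have hdisj : Disjoint C (LinearMap.funLeft Fqm Fqm f).ker := by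
    rw [LinearMap.disjoint_ker]
    intro x hx (hxf : x ∘ f = 0)
    by_contra hx0
    have hweight := rankWeight_add_card_le_comp Fq hf x
    rw [hxf, rankWeight_zero] at hweight
    have := minRankDist_le_rankWeight Fq hx hx0
    omega
  rw [← LinearMap.range_domRestrict]
  exact LinearMap.finrank_range_of_inj (LinearMap.injective_domRestrict_iff.2 hdisj)

theorem minRankDist_add_card_le_map_funLeft (hf : Function.Injective f)
    (hP : C.map (LinearMap.funLeft Fqm Fqm f) ≠ ⊥) :
    minRankDist Fq C + Fintype.card κ ≤
      minRankDist Fq (C.map (LinearMap.funLeft Fqm Fqm f)) + Fintype.card ι := by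
  obtain ⟨_, ⟨x, hx, rfl⟩, hxf, hweight⟩ := exists_rankWeight_eq_minRankDist Fq hP
  have hx0 : x ≠ 0 := by
    rintro rfl
    exact hxf (map_zero _)
  calc minRankDist Fq C + Fintype.card κ
      ≤ rankWeight Fq x + Fintype.card κ := by gcongr; exact minRankDist_le_rankWeight Fq hx hx0
    _ ≤ rankWeight Fq (x ∘ f) + Fintype.card ι := rankWeight_add_card_le_comp Fq hf x
    _ = _ := congrArg (· + Fintype.card ι) hweight

theorem minRankDist_add_finrank_le (hC : C ≠ ⊥) :
    minRankDist Fq C + Module.finrank Fqm ↥C ≤ Fintype.card ι + 1 := by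
  have hpos : 0 < Module.finrank Fqm ↥C := Nat.pos_of_ne_zero (mt Submodule.finrank_eq_zero.1 hC)
  have hle : Module.finrank Fqm ↥C ≤ Fintype.card ι := by simpa using C.finrank_le
  by_contra! hlarge
  obtain ⟨g⟩ : Nonempty (Fin (Module.finrank Fqm ↥C - 1) ↪ ι) :=
    Function.Embedding.nonempty_of_card_le (by rw [Fintype.card_fin]; omega)
  have hdim : Module.finrank Fqm ↥(C.map (LinearMap.funLeft Fqm Fqm g)) = Module.finrank Fqm ↥C :=
    finrank_map_funLeft_of_card_lt Fq g.injective (by rw [Fintype.card_fin]; omega)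
  have hdim_le := (C.map (LinearMap.funLeft Fqm Fqm g)).finrank_le
  rw [hdim, Module.finrank_fintype_fun_eq_card, Fintype.card_fin] at hdim_le
  omega

/-- Maximum rank distance codes: the nonzero codes attaining the Singleton bound
`minRankDist_add_finrank_le`. The paper's condition that the length be at most `[Fqm : Fq]`
is not part of the predicate. -/
structure IsMRD (C : Submodule Fqm (ι → Fqm)) : Prop where
  ne_bot : C ≠ ⊥
  minRankDist_eq : minRankDist Fq C = Fintype.card ι - Module.finrank Fqm ↥C + 1

theorem stmt19_general (hC : IsMRD Fq C) (hf : Function.Injective f)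
    (hκ : Module.finrank Fqm ↥C ≤ Fintype.card κ) :
    Module.finrank Fqm ↥(C.map (LinearMap.funLeft Fqm Fqm f)) = Module.finrank Fqm ↥C ∧
      IsMRD Fq (C.map (LinearMap.funLeft Fqm Fqm f)) := by
  have hle : Module.finrank Fqm ↥C ≤ Fintype.card ι := by simpa using C.finrank_le
  have hd := hC.minRankDist_eq
  have hdim : Module.finrank Fqm ↥(C.map (LinearMap.funLeft Fqm Fqm f)) = Module.finrank Fqm ↥C :=
    finrank_map_funLeft_of_card_lt Fq hf (by omega)
  have hP : C.map (LinearMap.funLeft Fqm Fqm f) ≠ ⊥ := by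
    rw [Ne, ← Submodule.finrank_eq_zero, hdim, Submodule.finrank_eq_zero]
    exact hC.ne_bot
  have hlower := minRankDist_add_card_le_map_funLeft Fq hf hP
  have hupper := minRankDist_add_finrank_le Fq hP
  exact ⟨hdim, hP, by omega⟩

end Puncturing

/-- Let `m ≥ N` and `C ⊆ F_{q^m}^N` be a nonzero MRD code, and let
`ℐ ⊆ {1,…,N}` with `|ℐ| ≥ N - dim C` and `|ℐ| ≥ dim C`. Then the punctured code
`P_ℐ(C)` is an MRD code of length `|ℐ|` with `dim P_ℐ(C) = dim C` and
`d_R(P_ℐ(C)) = |ℐ| - dim C + 1`. -/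
theorem stmt19 (m N : ℕ) [Fintype Fq] [Fintype Fqm]
    (hq : Fintype.card Fq = q) (hm : Module.finrank Fq Fqm = m) (hmN : N ≤ m)
    (C : Submodule Fqm (Fin N → Fqm)) (hC : C ≠ ⊥)
    (hMRD : minRankDist Fq C = N - Module.finrank Fqm ↥C + 1)
    (I : Finset (Fin N))
    (h1 : N - Module.finrank Fqm ↥C ≤ I.card)
    (h2 : Module.finrank Fqm ↥C ≤ I.card) :
    Module.finrank Fqm ↥(puncture I C) = Module.finrank Fqm ↥C ∧
    minRankDist Fq (puncture I C) = I.card - Module.finrank Fqm ↥C + 1 ∧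
    minRankDist Fq (puncture I C) =
      I.card - Module.finrank Fqm ↥(puncture I C) + 1 := by
  obtain ⟨hdim, hP⟩ : Module.finrank Fqm ↥(puncture I C) = Module.finrank Fqm ↥C ∧
      IsMRD Fq (puncture I C) :=
    stmt19_general Fq ⟨hC, by simpa using hMRD⟩ Subtype.val_injective (by simpa using h2)
  simpa [hdim] using hP.minRankDist_eq

end
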